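/- Let $(Y,d)$ be a metric space equipped with a Borel measure $\nu$, write $B(x,r)$ for the closed ball of radius $r$ around $x$, and let $K>0$, $C>0$, $D>0$ and $a>1$ be constants such that $\nu(B(x,r))\le K\,r^{D}$ for every $x\in Y$ and every $r>0$ (upper Ahlfors regularity). Let $h:Y\times Y\to\mathbb{N}$ be a function satisfying $d(x,y)\le C\,a^{-h(x,y)}$ for all $x\ne y$ in $Y$. If $\beta>1$ and $\beta^{2}<a^{D}$, then for every $x\in Y$ the integral $\int_Y \beta^{2h(x,y)}\,d\nu(y)$ is finite. -/

import Mathlib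

open MeasureTheory

/-- A function of the form `c ∘ n` with `n` natural-number valued (not necessarily measurable) is
controlled by the measures of measurable sets `s m` containing the level sets of `n`. -/
theorem lintegral_comp_nat_le_tsum {Y : Type*} [MeasurableSpace Y] (ν : Measure Y)
    (n : Y → ℕ) (c : ℕ → ENNReal) (s : ℕ → Set Y) (hs : ∀ m, MeasurableSet (s m))
    (hn : ∀ y, y ∈ s (n y)) :
    ∫⁻ y, c (n y) ∂ν ≤ ∑' m, c m * ν (s m) := by
  calc ∫⁻ y, c (n y) ∂ν
      ≤ ∫⁻ y, ∑' m, (s m).indicator (fun _ => c m) y ∂ν := by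
        refine lintegral_mono fun y => ?_
        calc c (n y) = (s (n y)).indicator (fun _ => c (n y)) y := by
              rw [Set.indicator_of_mem (hn y)]
          _ ≤ _ := ENNReal.le_tsum (f := fun m => (s m).indicator (fun _ => c m) y) (n y)
    _ = ∑' m, c m * ν (s m) := by
        rw [lintegral_tsum fun m => (measurable_const.indicator (hs m)).aemeasurable]
        simp [hs]

theorem pow_mul_ahlfors_bound_eq {K C D a : ℝ} (hC : 0 < C) (ha : 0 < a) (β : ℝ) (m : ℕ) :
    β ^ (2 * m) * (K * (C * a ^ (-(m : ℤ))) ^ D) = K * C ^ D * (β ^ 2 / a ^ D) ^ m := by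
  have hpow : (a ^ (-(m : ℤ))) ^ D = ((a ^ D) ^ m)⁻¹ := by
    rw [zpow_neg, zpow_natCast, Real.inv_rpow (by positivity), ← Real.rpow_natCast,
      ← Real.rpow_natCast, ← Real.rpow_mul ha.le, ← Real.rpow_mul ha.le, mul_comm]
  rw [Real.mul_rpow hC.le (by positivity), hpow, pow_mul, div_pow, div_eq_mul_inv]
  ring

theorem integral_finite_of_subcritical
    {Y : Type*} [MetricSpace Y] [MeasurableSpace Y] [BorelSpace Y]
    (ν : Measure Y) (K C D a : ℝ)
    (hK : 0 < K) (hC : 0 < C) (hD : 0 < D) (ha : 1 < a)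
    (hAhlfors : ∀ x : Y, ∀ r : ℝ, 0 < r →
      ν (Metric.closedBall x r) ≤ ENNReal.ofReal (K * r ^ D))
    (h : Y → Y → ℕ)
    (hh : ∀ x y : Y, x ≠ y → dist x y ≤ C * a ^ (-(h x y : ℤ)))
    (β : ℝ) (hβ : 1 < β) (hβa : β ^ 2 < a ^ D) :
    ∀ x : Y, ∫⁻ y, ENNReal.ofReal (β ^ (2 * h x y)) ∂ν < ⊤ := by
  intro x
  have ha0 : 0 < a := one_pos.trans ha
  have haD : 0 < a ^ D := Real.rpow_pos_of_pos ha0 D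
  have hr (m : ℕ) : 0 < C * a ^ (-(m : ℤ)) := by positivity
  have hmem (y : Y) : y ∈ Metric.closedBall x (C * a ^ (-(h x y : ℤ))) := by
    rcases eq_or_ne x y with rfl | hxy
    · exact Metric.mem_closedBall_self (hr _).le
    · exact Metric.mem_closedBall'.2 (hh x y hxy)
  have hsum : Summable fun m : ℕ => K * C ^ D * (β ^ 2 / a ^ D) ^ m :=
    (summable_geometric_of_lt_one (by positivity) ((div_lt_one haD).2 hβa)).mul_left _
  calc ∫⁻ y, ENNReal.ofReal (β ^ (2 * h x y)) ∂ν
      ≤ ∑' m : ℕ, ENNReal.ofReal (β ^ (2 * m)) *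
          ν (Metric.closedBall x (C * a ^ (-(m : ℤ)))) :=
        lintegral_comp_nat_le_tsum ν (h x) (fun m => ENNReal.ofReal (β ^ (2 * m)))
          (fun m => Metric.closedBall x (C * a ^ (-(m : ℤ))))
          (fun _ => Metric.isClosed_closedBall.measurableSet) hmem
    _ ≤ ∑' m : ℕ, ENNReal.ofReal (K * C ^ D * (β ^ 2 / a ^ D) ^ m) := by
        refine ENNReal.tsum_le_tsum fun m => ?_
        rw [← pow_mul_ahlfors_bound_eq hC ha0, ENNReal.ofReal_mul (by positivity)]
        gcongr
        exact hAhlfors x _ (hr m)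
    _ < ⊤ := hsum.tsum_ofReal_lt_top
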